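/- Let g be a complex semisimple Lie algebra, χ ∈ g a semisimple element, and for t ∈ ℂ let g_t = {y ∈ g : [χ,y] = t·y}. If e ∈ g_1 is a nonzero (necessarily nilpotent) element, then there exist h ∈ g_0 and f ∈ g_{-1} such that (e,h,f) is an sl(2)-triple: [h,e] = 2e, [h,f] = -2f, [e,f] = h. -/

import Mathlib

open Module in
/-- If `XA - AX = A` in a finite-dimensional setting then `A` is nilpotent. -/
lemma aux_nilp {V : Type*} [AddCommGroup V] [Module ℂ V] [FiniteDimensional ℂ V]
    (X A : End ℂ V) (h : X * A - A * X = A) : IsNilpotent A := by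
  by_contra hn
  let T : End ℂ (End ℂ V) := LinearMap.mulLeft ℂ X - LinearMap.mulRight ℂ X
  have hT : ∀ n : ℕ, X * A ^ n - A ^ n * X = (n : ℂ) • A ^ n := by
    intro n
    induction n with
    | zero => simp
    | succ n ih =>
      have : X * A ^ (n+1) - A ^ (n+1) * X
          = (X * A ^ n - A ^ n * X) * A + A ^ n * (X * A - A * X) := by
        rw [pow_succ]; noncomm_ring
      rw [this, ih, h, pow_succ, smul_mul_assoc]
      push_cast
      module
  have hev : ∀ n : ℕ, T.HasEigenvalue (n : ℂ) := by
    intro n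
    apply End.hasEigenvalue_of_hasEigenvector (x := A ^ n)
    refine ⟨End.mem_eigenspace_iff.mpr ?_, fun h0 => hn ⟨n, h0⟩⟩
    simpa [T] using hT n
  have hfin := End.finite_hasEigenvalue T
  exact Set.infinite_of_injective_forall_mem (f := fun n : ℕ => (n : ℂ))
    Nat.cast_injective hev hfin

/-- Jacobson lemma on nilpotent commutators. -/
lemma aux_jacobson {R : Type*} [Ring R] [Algebra ℂ R] (A B C : R)
    (hC : A * B - B * A = C) (hAC : A * C = C * A) (hA : IsNilpotent A) : IsNilpotent C := by
  have hcomm : Commute A C := hAC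
  have key : ∀ n : ℕ, A ^ (n+1) * B - B * A ^ (n+1) = ((n : ℂ) + 1) • (A ^ n * C) := by
    intro n
    induction n with
    | zero => simpa using hC
    | succ n ih =>
      have : A ^ (n+1+1) * B - B * A ^ (n+1+1)
          = A ^ (n+1) * (A * B - B * A) + (A ^ (n+1) * B - B * A ^ (n+1)) * A := by
        rw [pow_succ A (n+1)]; noncomm_ring
      rw [this, ih, hC, smul_mul_assoc, mul_assoc (A ^ n) C A, ← hAC, ← mul_assoc, ← pow_succ]
      push_cast
      module
  have down : ∀ j : ℕ, (∃ m : ℕ, A ^ j * C ^ m = 0) → ∃ m : ℕ, C ^ m = 0 := by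
    intro j
    induction j with
    | zero => simp
    | succ j ih =>
      rintro ⟨m, hm⟩
      apply ih
      refine ⟨m + 1 + m, ?_⟩
      have hm' : C ^ m * A ^ (j+1) = 0 := by
        rw [← hm]; exact ((hcomm.pow_pow (j+1) m).eq).symm
      have h1 : C ^ m * (A ^ (j+1) * B - B * A ^ (j+1)) * C ^ m = 0 := by
        have : C ^ m * (A ^ (j+1) * B - B * A ^ (j+1)) * C ^ m
          = (C ^ m * A ^ (j+1)) * (B * C ^ m) - C ^ m * B * (A ^ (j+1) * C ^ m) := by
          noncomm_ring
        rw [this, hm, hm']; simp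
      rw [key, mul_smul_comm, smul_mul_assoc] at h1
      have hne : (j : ℂ) + 1 ≠ 0 := by exact_mod_cast Nat.succ_ne_zero j
      have h2 := (smul_eq_zero_iff_right hne).mp h1
      rw [← h2, pow_add, pow_add, pow_one, ← mul_assoc, ← mul_assoc, ← mul_assoc,
        (hcomm.pow_pow j m).eq]
  obtain ⟨k, hk⟩ := hA
  obtain ⟨m, hm⟩ := down k ⟨0, by simp [hk]⟩
  exact ⟨m, hm⟩

open Module in
/-- Injectivity step of the Morozov lemma. -/
lemma aux_inj {V : Type*} [AddCommGroup V] [Module ℂ V]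
    (A B H : End ℂ V) (hH : A * B - B * A = H) (hHA : H * A - A * H = (2 : ℂ) • A)
    (hA : IsNilpotent A) (v : V) (hv : A v = 0) (hHv : H v = (-2 : ℂ) • v) : v = 0 := by
  have hcr : ∀ n : ℕ, A ^ n * H = H * A ^ n - (2 * (n : ℂ)) • A ^ n := by
    intro n
    induction n with
    | zero => simp
    | succ n ih =>
      have h2 : A * H = H * A - (2 : ℂ) • A := by rw [← hHA]; abel
      rw [pow_succ, mul_assoc, h2, mul_sub, ← mul_assoc, ih, sub_mul, mul_assoc, mul_smul_comm,
        smul_mul_assoc]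
      push_cast
      module
  have key : ∀ n : ℕ, A ^ (n+1) * B - B * A ^ (n+1)
      = ((n : ℂ) + 1) • (H * A ^ n - (n : ℂ) • A ^ n) := by
    intro n
    induction n with
    | zero => simpa using hH
    | succ n ih =>
      have : A ^ (n+1+1) * B - B * A ^ (n+1+1)
          = A ^ (n+1) * (A * B - B * A) + (A ^ (n+1) * B - B * A ^ (n+1)) * A := by
        rw [pow_succ A (n+1)]; noncomm_ring
      rw [this, ih, hH, hcr, smul_mul_assoc, sub_mul, mul_assoc, smul_mul_assoc, ← pow_succ]
      push_cast
      module
  have hr : ∀ n : ℕ, ∃ w, (A ^ n) w = v := by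
    intro n
    induction n with
    | zero => exact ⟨v, by simp⟩
    | succ n ih =>
      obtain ⟨w, hw⟩ := ih
      have h1 := LinearMap.congr_fun (key n) w
      have h3 : (A ^ (n+1)) w = 0 := by
        rw [pow_succ', Module.End.mul_apply, hw, hv]
      simp only [LinearMap.sub_apply, Module.End.mul_apply, LinearMap.smul_apply, hw, h3, hHv,
        map_zero, sub_zero] at h1
      have hne : (n : ℂ) + 1 ≠ 0 := by exact_mod_cast Nat.succ_ne_zero n
      have hne2 : -(2 : ℂ) - n ≠ 0 := by
        have : (n : ℂ) + 2 ≠ 0 := by exact_mod_cast Nat.succ_ne_zero (n+1)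
        intro h; apply this; linear_combination -h
      refine ⟨(((n : ℂ) + 1) * (-2 - n))⁻¹ • B w, ?_⟩
      rw [map_smul, h1, ← sub_smul, smul_smul, smul_smul, mul_assoc,
        inv_mul_cancel₀ (mul_ne_zero hne hne2), one_smul]
  obtain ⟨k, hk⟩ := hA
  obtain ⟨w, hw⟩ := hr k
  rw [← hw, hk]; rfl

open Module in
/-- Projection to an eigenspace of a diagonalizable operator. -/
lemma aux_proj {V : Type*} [AddCommGroup V] [Module ℂ V] (X : End ℂ V)
    (hX : (⨆ μ : ℂ, X.eigenspace μ) = ⊤) (t : ℂ) :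
    ∃ P : End ℂ V, (∀ v, P v ∈ X.eigenspace t) ∧ (∀ v ∈ X.eigenspace t, P v = v) ∧
      ∀ s ≠ t, ∀ v ∈ X.eigenspace s, P v = 0 := by
  have hc : IsCompl (X.eigenspace t) (⨆ s, ⨆ (_ : s ≠ t), X.eigenspace s) := by
    refine ⟨X.eigenspaces_iSupIndep t, ?_⟩
    rw [codisjoint_iff, eq_top_iff, ← hX]
    apply iSup_le
    intro s
    by_cases h : s = t
    · subst h; exact le_sup_left
    · exact le_sup_of_le_right (le_iSup₂_of_le s h le_rfl)
  refine ⟨(X.eigenspace t).subtype ∘ₗ (X.eigenspace t).projectionOnto _ hc, ?_, ?_, ?_⟩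
  · intro v; simp
  · intro v hv
    have := Submodule.projectionOnto_apply_left hc ⟨v, hv⟩
    simp [this]
  · intro s hs v hv
    have : v ∈ (⨆ s, ⨆ (_ : s ≠ t), X.eigenspace s) :=
      (le_iSup₂_of_le (f := fun s (_ : s ≠ t) => X.eigenspace s) s hs le_rfl) hv
    simpa using (Submodule.projectionOnto_apply_eq_zero_iff hc).mpr this

/-- Graded Jacobson–Morozov: in a complex semisimple Lie algebra, if `χ` is a semisimple
element (its adjoint action is diagonalizable) and `e ≠ 0` lies in the `1`-eigenspace
`g_1` of `ad χ`, then there are `h ∈ g_0` and `f ∈ g_{-1}` with `(e,h,f)` an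
`sl(2)`-triple: `[h,e] = 2e`, `[h,f] = -2f`, `[e,f] = h`. -/
theorem stmt_10 (g : Type*) [LieRing g] [LieAlgebra ℂ g] [FiniteDimensional ℂ g]
    [LieAlgebra.IsSemisimple ℂ g]
    (χ : g) (hχdiag : (⨆ μ : ℂ, Module.End.eigenspace (LieAlgebra.ad ℂ g χ) μ) = ⊤)
    (e : g) (he : e ∈ Module.End.eigenspace (LieAlgebra.ad ℂ g χ) 1) (he0 : e ≠ 0) :
    ∃ h ∈ Module.End.eigenspace (LieAlgebra.ad ℂ g χ) 0,
      ∃ f ∈ Module.End.eigenspace (LieAlgebra.ad ℂ g χ) (-1),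
        ⁅h, e⁆ = (2 : ℂ) • e ∧ ⁅h, f⁆ = (-2 : ℂ) • f ∧ ⁅e, f⁆ = h := by
  have adl : ∀ x y : g, LieAlgebra.ad ℂ g x * LieAlgebra.ad ℂ g y
      - LieAlgebra.ad ℂ g y * LieAlgebra.ad ℂ g x = LieAlgebra.ad ℂ g ⁅x, y⁆ := by
    intro x y
    ext z
    simp
  have mem : ∀ (t : ℂ) (x : g), x ∈ Module.End.eigenspace (LieAlgebra.ad ℂ g χ) t ↔
      ⁅χ, x⁆ = t • x := by
    intro t x
    rw [Module.End.mem_eigenspace_iff, LieAlgebra.ad_apply]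
  have grade : ∀ (s t : ℂ) (x y : g), ⁅χ, x⁆ = s • x → ⁅χ, y⁆ = t • y →
      ⁅χ, ⁅x, y⁆⁆ = (s + t) • ⁅x, y⁆ := by
    intro s t x y hx hy
    rw [leibniz_lie, hx, hy, smul_lie, lie_smul, add_smul]
  have he1 : ⁅χ, e⁆ = e := by simpa using (mem 1 e).mp he
  have he1' : ⁅χ, e⁆ = (1 : ℂ) • e := (mem 1 e).mp he
  have hAnil : IsNilpotent (LieAlgebra.ad ℂ g e) :=
    aux_nilp (LieAlgebra.ad ℂ g χ) _ (by rw [adl, he1])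
  -- induction principle on eigenvectors
  have hind : ∀ S : Submodule ℂ g, (∀ (t : ℂ) (x : g), ⁅χ, x⁆ = t • x → x ∈ S) →
      ∀ x, x ∈ S := by
    intro S hS x
    have : (⊤ : Submodule ℂ g) ≤ S := by
      rw [← hχdiag]
      exact iSup_le fun t x hx => hS t x ((mem t x).mp hx)
    exact this Submodule.mem_top
  obtain ⟨P, hP1, hP2, hP3⟩ := aux_proj _ hχdiag (-1)
  obtain ⟨Q, hQ1, hQ2, hQ3⟩ := aux_proj _ hχdiag 1
  have hPQ : ∀ x, ⁅e, ⁅e, P x⁆⁆ = Q ⁅e, ⁅e, x⁆⁆ := by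
    intro x
    have := hind (LinearMap.eqLocus (LieAlgebra.ad ℂ g e * LieAlgebra.ad ℂ g e * P)
      (Q * (LieAlgebra.ad ℂ g e * LieAlgebra.ad ℂ g e))) ?_ x
    · simpa [LinearMap.mem_eqLocus] using this
    · intro t x hx
      have h2 := grade _ _ _ _ he1' (grade _ _ _ _ he1' hx)
      simp only [LinearMap.mem_eqLocus, Module.End.mul_apply, LieAlgebra.ad_apply]
      by_cases ht : t = -1
      · subst ht
        rw [hP2 x ((mem _ _).mpr hx), hQ2 _ ((mem _ _).mpr (by rw [h2]; norm_num))]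
      · rw [hP3 t ht x ((mem _ _).mpr hx), hQ3 _ ?_ _ ((mem _ _).mpr h2)]
        · simp
        · intro h; apply ht; linear_combination h
  have inv : ∀ x y z : g, killingForm ℂ g ⁅x, y⁆ z = killingForm ℂ g x ⁅y, z⁆ :=
    fun x y z => LieModule.traceForm_apply_lie_apply ℂ g g x y z
  have hκP : ∀ z, killingForm ℂ g (P z) e = killingForm ℂ g z e := by
    intro z
    have := hind (LinearMap.eqLocus ((killingForm ℂ g).flip e ∘ₗ P)
      ((killingForm ℂ g).flip e)) ?_ z
    · simpa [LinearMap.mem_eqLocus] using this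
    · intro t x hx
      simp only [LinearMap.mem_eqLocus, LinearMap.comp_apply, LinearMap.flip_apply]
      by_cases ht : t = -1
      · subst ht
        rw [hP2 x ((mem _ _).mpr hx)]
      · rw [hP3 t ht x ((mem _ _).mpr hx)]
        have h1 := inv x χ e
        rw [he1, ← lie_skew, hx] at h1
        simp only [map_neg, map_smul, LinearMap.neg_apply, LinearMap.smul_apply, smul_eq_mul] at h1
        have h2 : (t + 1) * killingForm ℂ g x e = 0 := by linear_combination -h1
        have h3 : t + 1 ≠ 0 := fun h => ht (by linear_combination h)
        simpa using ((mul_eq_zero.mp h2).resolve_left h3).symm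
  have hnd : (killingForm ℂ g).Nondegenerate := LieAlgebra.IsKilling.killingForm_nondegenerate ℂ g
  -- step a
  have stepa : ∃ y, ⁅e, ⁅e, y⁆⁆ = e := by
    by_contra hno
    have hnr : e ∉ LinearMap.range (LieAlgebra.ad ℂ g e * LieAlgebra.ad ℂ g e) := by
      rintro ⟨y, hy⟩; exact hno ⟨y, by simpa using hy⟩
    obtain ⟨φ, hφe, hφ⟩ := Submodule.exists_le_ker_of_notMem hnr
    obtain ⟨z, hz⟩ : ∃ z, killingForm ℂ g z = φ := by
      refine ⟨((killingForm ℂ g).toDual hnd).symm φ, ?_⟩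
      ext w
      exact LinearMap.BilinForm.apply_toDual_symm_apply φ w
    have hz2 : ⁅e, ⁅e, z⁆⁆ = 0 := by
      apply hnd.1
      intro w
      rw [← lie_skew, ← lie_skew e z, neg_lie, neg_neg, inv, inv, hz]
      exact hφ ⟨w, by simp⟩
    have hPz : ⁅e, ⁅e, P z⁆⁆ = 0 := by rw [hPQ, hz2, map_zero]
    have hw0 : ⁅χ, ⁅e, P z⁆⁆ = 0 := by
      rw [grade _ _ _ _ he1' ((mem _ _).mp (hP1 z))]; simp
    have hCnil : IsNilpotent (LieAlgebra.ad ℂ g ⁅e, P z⁆) := by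
      refine aux_jacobson _ _ _ (adl e (P z)) ?_ hAnil
      rw [← sub_eq_zero, adl, hPz, map_zero]
    have hcomm : Commute (LieAlgebra.ad ℂ g χ) (LieAlgebra.ad ℂ g ⁅e, P z⁆) := by
      change _ = _
      rw [← sub_eq_zero, adl, hw0, map_zero]
    have htr : killingForm ℂ g χ ⁅e, P z⁆ = 0 := by
      rw [killingForm_apply_apply]
      exact (LinearMap.isNilpotent_trace_of_isNilpotent (hcomm.isNilpotent_mul_left hCnil)).eq_zero
    rw [← inv, he1, LieModule.traceForm_comm, hκP, hz] at htr
    exact hφe htr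
  obtain ⟨y0, hy0⟩ := stepa
  have hy : ⁅e, ⁅e, P y0⁆⁆ = e := by rw [hPQ, hy0, hQ2 _ he]
  have hyg : ⁅χ, P y0⁆ = (-1 : ℂ) • P y0 := (mem _ _).mp (hP1 y0)
  generalize P y0 = y at hy hyg
  obtain ⟨f0, hf0⟩ : ∃ f0, f0 = (-2 : ℂ) • y := ⟨_, rfl⟩
  obtain ⟨h, hh⟩ : ∃ h, h = ⁅e, f0⁆ := ⟨_, rfl⟩
  have hf0g : ⁅χ, f0⁆ = (-1 : ℂ) • f0 := by rw [hf0, lie_smul, hyg, smul_comm]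
  have hhe : ⁅h, e⁆ = (2 : ℂ) • e := by
    rw [hh, hf0, lie_smul, smul_lie, ← lie_skew, hy]; module
  have hhg : ⁅χ, h⁆ = 0 := by
    rw [hh, grade _ _ _ _ he1' hf0g]; simp
  have hhg' : ⁅χ, h⁆ = (0 : ℂ) • h := by rw [hhg, zero_smul]
  have heh : ⁅e, h⁆ = (-2 : ℂ) • e := by rw [← lie_skew, hhe]; module
  -- the space z(e) ∩ g_{-1}
  let Z : Submodule ℂ g := LinearMap.ker (LieAlgebra.ad ℂ g e) ⊓
    Module.End.eigenspace (LieAlgebra.ad ℂ g χ) (-1)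
  have memZ : ∀ x, x ∈ Z ↔ ⁅e, x⁆ = 0 ∧ ⁅χ, x⁆ = (-1 : ℂ) • x := by
    intro x
    rw [Submodule.mem_inf, mem, LinearMap.mem_ker, LieAlgebra.ad_apply]
  let T : Module.End ℂ g := LieAlgebra.ad ℂ g h + (2 : ℂ) • 1
  have hTapp : ∀ x, T x = ⁅h, x⁆ + (2 : ℂ) • x := by intro x; simp [T]
  have hTZ : ∀ x ∈ Z, T x ∈ Z := by
    intro x hx
    rw [memZ] at hx
    rw [memZ, hTapp]
    constructor
    · rw [lie_add, lie_smul, hx.1, leibniz_lie, heh, hx.1, smul_lie, hx.1]; simp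
    · rw [lie_add, lie_smul, grade _ _ _ _ hhg' hx.2, hx.2]; module
  have hinj : Function.Injective (T.restrict hTZ) := by
    rw [← LinearMap.ker_eq_bot, LinearMap.ker_eq_bot']
    rintro ⟨x, hx⟩ h0
    have h1 : T x = 0 := congrArg Subtype.val h0
    rw [hTapp] at h1
    have hx' := (memZ x).mp hx
    have := aux_inj (LieAlgebra.ad ℂ g e) (LieAlgebra.ad ℂ g f0) (LieAlgebra.ad ℂ g h)
      (by rw [adl, hh]) (by rw [adl, hhe, map_smul]) hAnil x (by simpa using hx'.1)
      (by rw [LieAlgebra.ad_apply, eq_neg_of_add_eq_zero_left h1]; module)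
    exact Subtype.ext this
  have hsurj := LinearMap.injective_iff_surjective.mp hinj
  have hu : T f0 ∈ Z := by
    rw [memZ, hTapp]
    constructor
    · rw [lie_add, lie_smul, leibniz_lie, heh, smul_lie, ← hh, lie_self]; module
    · rw [lie_add, lie_smul, grade _ _ _ _ hhg' hf0g, hf0g]; module
  obtain ⟨⟨v, hv⟩, hvT⟩ := hsurj ⟨T f0, hu⟩
  have hvT' : T v = T f0 := congrArg Subtype.val hvT
  have hv' := (memZ v).mp hv
  refine ⟨h, (mem _ _).mpr hhg', f0 - v, (mem _ _).mpr ?_, hhe, ?_, ?_⟩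
  · rw [lie_sub, hf0g, hv'.2]; module
  · have : T (f0 - v) = 0 := by rw [map_sub, hvT', sub_self]
    rw [hTapp] at this
    rw [eq_neg_of_add_eq_zero_left this]; module
  · rw [lie_sub, hv'.1, sub_zero, hh]
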